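/- Fix integers m ≥ 1 and r with 1 ≤ r ≤ m, and a real l > 0. There exists a constant C > 0, independent of M and k, such that for every integer M ≥ 2, every integer k ≥ 1, and every m-times continuously differentiable function f : ℝ → ℝ, the Legendre wavelet projection Ψ_{k,M−1}(f) satisfies ‖f − Ψ_{k,M−1}(f)‖_{H^r(0,l)} ≤ C (M−1)^{2r−1/2−m} |f|_{H^{r,m,M−1,k}(0,l)}, where the H^r norm on (0,l) is computed piecewise, i.e. ‖g‖²_{H^r(0,l)} = Σ_{n=1}^{2^{k−1}} Σ_{j=0}^{r} ‖g^{(j)}‖²_{L²(J_{k,n})} with J_{k,n} = ((n−1)l/2^{k−1}, n l/2^{k−1}). -/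

import Mathlib

/-!
On the subinterval `J_{k,n}` the wavelet projection is, after an affine change of variables, the
`L²(-1,1)`-orthogonal projection `P_M u` of the transplanted function `u` onto polynomials of degree
`< M` (`waveletProj_eq`). It therefore suffices to prove, on `(-1,1)` and for `j ≤ r`, the estimate
`M^(2m+1) ‖(u - P_M u)^(j)‖² ≤ A M^(4r) ‖u^(i)‖²` with `i = max j (min m M)`
(`exists_reference_bound`); the factors produced by scaling are at most `2^(k(2r-2i))` up to powers
of `1 + l`, and one sums over `j` and `n`.

The case `j = 0` rests on the recurrence `P_{k+2}' - P_k' = (2k+3) P_{k+1}`. Integrated against `u`,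
it expresses the Legendre coefficients of `u` through those of `u'` with a gain of a factor `k`
(`cf_rec`). Together with the completeness of the Legendre polynomials, this gives
`‖u - P_M u‖² ≤ C M^(-2s) ‖u^(s)‖²` for `s ≤ M` (`exists_err_bound`).

For higher `j` one writes `(u - P_M u)' = (u' - P_M u') + (P_M u' - (P_M u)')` and inducts
(`exists_deriv_bound_step`). The last bracket is a polynomial of degree `< M`, so Markov's inequality
in `L²` costs `M²` for each further derivative (`integral_sq_iterate_derivative_le`). The size of
that polynomial is the delicate point: its Legendre coefficients are signed sums of the two endpoint
values of `u - P_M u`, and these are determined by the coefficients of `u'` of degrees `M - 1` and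
`M`. Hence its norm is at most `M^(1/2)` times the projection error of `u'`, instead of `M` times
(`integral_sq_commutator_le`), which accounts for the `1/2` in the exponent.
-/

open intervalIntegral

/-- The `m`-th Legendre polynomial, via Rodrigues' formula. -/
noncomputable def legendreP (m : ℕ) : ℝ → ℝ :=
  fun x => (1 / ((2 : ℝ) ^ m * (Nat.factorial m : ℝ))) *
    iteratedDeriv m (fun y : ℝ => (y ^ 2 - 1) ^ m) x

/-- The Legendre wavelet `ψ_{n,m}` on `[0, l)` at resolution level `k`. -/
noncomputable def legWavelet (l : ℝ) (k n m : ℕ) : ℝ → ℝ :=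
  fun x => if ((n : ℝ) - 1) * l / 2 ^ (k - 1) ≤ x ∧ x < (n : ℝ) * l / 2 ^ (k - 1) then
      (2 : ℝ) ^ ((k : ℝ) / 2) * Real.sqrt ((2 * (m : ℝ) + 1) / (2 * l)) *
        legendreP m (((2 : ℝ) ^ k / l) * x - 2 * (n : ℝ) + 1)
    else 0

/-- The Legendre wavelet coefficient `a_{n,m} = ∫_0^l f ψ_{n,m}`. -/
noncomputable def waveletCoeff (l : ℝ) (k : ℕ) (f : ℝ → ℝ) (n m : ℕ) : ℝ :=
  ∫ x in (0 : ℝ)..l, f x * legWavelet l k n m x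

/-- The Legendre wavelet projection `Ψ_{k,M-1}(f)`. -/
noncomputable def waveletProj (l : ℝ) (k M : ℕ) (f : ℝ → ℝ) : ℝ → ℝ :=
  fun x => ∑ n ∈ Finset.Icc 1 (2 ^ (k - 1)), ∑ m' ∈ Finset.range M,
    waveletCoeff l k f n m' * legWavelet l k n m' x

/-- The seminorm `|f|_{H^{r,m,M-1,k}(0,l)}`. -/
noncomputable def semiNorm (l : ℝ) (r m M k : ℕ) (f : ℝ → ℝ) : ℝ :=
  Real.sqrt (∑ j ∈ Finset.Icc (min m M) m,
    ((2 : ℝ) ^ k) ^ (2 * (r : ℤ) - 2 * (j : ℤ)) *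
      ∫ x in (0 : ℝ)..l, (iteratedDeriv j f x) ^ 2)

/-! ### Legendre polynomials -/

open Polynomial in
/-- The `k`-th Legendre polynomial as an element of `ℝ[X]`. -/
noncomputable def legPoly (k : ℕ) : Polynomial ℝ :=
  C (1 / ((2 : ℝ) ^ k * (Nat.factorial k : ℝ))) * derivative^[k] ((X ^ 2 - 1) ^ k)

open Polynomial

lemma iteratedDeriv_eval (p : ℝ[X]) (j : ℕ) :
    iteratedDeriv j (fun x => p.eval x) = fun x => (derivative^[j] p).eval x := by
  induction j with
  | zero => simp
  | succ j ih =>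
    rw [iteratedDeriv_succ, ih]
    funext x
    rw [Polynomial.deriv, Function.iterate_succ_apply']

lemma legendreP_eq (k : ℕ) (x : ℝ) : legendreP k x = (legPoly k).eval x := by
  have h : (fun y : ℝ => (y ^ 2 - 1) ^ k) = fun y => ((X ^ 2 - 1 : ℝ[X]) ^ k).eval y := by
    funext y; simp
  rw [legendreP, h, iteratedDeriv_eval, legPoly]
  simp

lemma natDegree_legPoly_le (k : ℕ) : (legPoly k).natDegree ≤ k := by
  refine (natDegree_C_mul_le _ _).trans ((natDegree_iterate_derivative _ _).trans ?_)
  have h : ((X ^ 2 - 1 : ℝ[X]) ^ k).natDegree ≤ k * 2 := by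
    refine natDegree_pow_le_of_le k ?_
    compute_degree
  omega

lemma legPoly_zero : legPoly 0 = 1 := by simp [legPoly]

lemma legPoly_one : legPoly 1 = X := by
  simp only [legPoly, Function.iterate_one, pow_one, derivative_sub, derivative_one, derivative_X_pow]
  ext n
  simp [coeff_X, coeff_C_mul]

/-- The recurrence `P_{k+2}' - P_k' = (2k+3) P_{k+1}`. -/
lemma legPoly_rec (k : ℕ) :
    derivative (legPoly (k + 2)) = C (2 * (k : ℝ) + 3) * legPoly (k + 1) + derivative (legPoly k) := by
  have h1 : derivative (derivative ((X ^ 2 - 1 : ℝ[X]) ^ (k + 2)))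
      = C (2 * ((k : ℝ) + 2)) * (C (2 * (k : ℝ) + 3) * (X ^ 2 - 1) ^ (k + 1)
        + C (2 * ((k : ℝ) + 1)) * (X ^ 2 - 1) ^ k) := by
    simp only [derivative_pow, derivative_sub, derivative_one, derivative_mul, derivative_X,
      Nat.add_sub_cancel, derivative_C, show k + 2 - 1 = k + 1 from rfl]
    simp only [map_add, map_mul, map_ofNat, map_natCast, map_one]
    push_cast
    simp
    ring
  have e : derivative (legPoly (k + 2)) = C (1 / ((2 : ℝ) ^ (k + 2) * (Nat.factorial (k + 2) : ℝ))) *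
      derivative^[k + 1] (derivative (derivative ((X ^ 2 - 1 : ℝ[X]) ^ (k + 2)))) := by
    rw [legPoly, derivative_C_mul, ← Function.iterate_succ_apply' derivative,
      ← Function.iterate_succ_apply derivative, ← Function.iterate_succ_apply derivative]
  have hf : ((Nat.factorial k : ℕ) : ℝ) ≠ 0 := by positivity
  rw [e, h1, iterate_derivative_C_mul, iterate_map_add, iterate_derivative_C_mul,
    iterate_derivative_C_mul, legPoly, legPoly, derivative_C_mul, ← Function.iterate_succ_apply' derivative]
  simp only [mul_add, ← mul_assoc, ← C_mul, Nat.factorial_succ, Nat.succ_eq_add_one]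
  congr 3
  · push_cast; field_simp; ring
  · push_cast; field_simp; ring

/-- `P_k(1) = 1`: only the term differentiating `(x - 1)^k` to a constant survives at `1`. -/
lemma legPoly_eval_one (k : ℕ) : (legPoly k).eval 1 = 1 := by
  have h : (X ^ 2 - 1 : ℝ[X]) ^ k = (X - C 1) ^ k * (X + 1) ^ k := by
    rw [← mul_pow]; congr 1; simp; ring
  have h2 := aeval_iterate_derivative_self ((X ^ 2 - 1 : ℝ[X]) ^ k) k (1 : ℝ)
    (p' := (X + 1) ^ k) (by simpa using h)
  rw [coe_aeval_eq_eval] at h2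
  rw [legPoly, eval_mul, eval_C, h2]
  have hf : ((Nat.factorial k : ℕ) : ℝ) ≠ 0 := by positivity
  simp
  norm_num
  field_simp

lemma legPoly_eval_neg_one (k : ℕ) : (legPoly k).eval (-1) = (-1) ^ k := by
  have h : (X ^ 2 - 1 : ℝ[X]) ^ k = (X - C (-1)) ^ k * (X - 1) ^ k := by
    rw [← mul_pow]; congr 1; simp; ring
  have h2 := aeval_iterate_derivative_self ((X ^ 2 - 1 : ℝ[X]) ^ k) k (-1 : ℝ)
    (p' := (X - 1) ^ k) (by simpa using h)
  rw [coe_aeval_eq_eval] at h2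
  rw [legPoly, eval_mul, eval_C, h2]
  have hf : ((Nat.factorial k : ℕ) : ℝ) ≠ 0 := by positivity
  have h3 : (-1 - 1 : ℝ) ^ k = (-1) ^ k * 2 ^ k := by rw [← mul_pow]; norm_num
  simp [h3]
  field_simp

/-! ### Legendre coefficients and orthogonality -/

/-- The unnormalised Legendre coefficient `∫_{-1}^1 u P_k`. -/
noncomputable def cf (k : ℕ) (u : ℝ → ℝ) : ℝ := ∫ x in (-1 : ℝ)..1, u x * (legPoly k).eval x

lemma integral_mul_derivative {u : ℝ → ℝ} (hu : ContDiff ℝ 1 u) (p : ℝ[X]) :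
    ∫ x in (-1 : ℝ)..1, u x * (derivative p).eval x
      = u 1 * p.eval 1 - u (-1) * p.eval (-1) - ∫ x in (-1 : ℝ)..1, deriv u x * p.eval x := by
  refine intervalIntegral.integral_mul_deriv_eq_deriv_mul (v := fun x => p.eval x)
    (fun x _ => (hu.differentiable one_ne_zero x).hasDerivAt) (fun x _ => p.hasDerivAt x)
    ?_ ?_
  · exact (hu.continuous_deriv le_rfl).intervalIntegrable _ _
  · exact (derivative p).continuous.intervalIntegrable _ _

lemma cf_sub (k : ℕ) {u v : ℝ → ℝ} (hu : Continuous u) (hv : Continuous v) :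
    cf k (fun x => u x - v x) = cf k u - cf k v := by
  have hp := (legPoly k).continuous
  simp only [cf, sub_mul]
  exact intervalIntegral.integral_sub ((hu.mul hp).intervalIntegrable _ _)
    ((hv.mul hp).intervalIntegrable _ _)

/-- Passing from `u'` to `u` gains a factor of order `k` on Legendre coefficients. -/
lemma cf_rec (k : ℕ) {u : ℝ → ℝ} (hu : ContDiff ℝ 1 u) :
    (2 * (k : ℝ) + 3) * cf (k + 1) u = cf k (deriv u) - cf (k + 2) (deriv u) := by
  have h1 := integral_mul_derivative hu (legPoly (k + 2))
  have h2 := integral_mul_derivative hu (legPoly k)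
  have h3 : ∫ x in (-1 : ℝ)..1, u x * (derivative (legPoly (k + 2))).eval x
      = (2 * (k : ℝ) + 3) * cf (k + 1) u
        + ∫ x in (-1 : ℝ)..1, u x * (derivative (legPoly k)).eval x := by
    rw [cf, ← intervalIntegral.integral_const_mul, ← intervalIntegral.integral_add]
    · refine intervalIntegral.integral_congr fun x _ => ?_
      simp only [legPoly_rec, eval_add, eval_mul, eval_C]
      ring
    · exact (continuous_const.mul
        (hu.continuous.mul (legPoly (k+1)).continuous)).intervalIntegrable _ _
    · exact (hu.continuous.mul (derivative (legPoly k)).continuous).intervalIntegrable _ _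
  simp only [legPoly_eval_one, legPoly_eval_neg_one, pow_add] at h1 h2
  simp only [cf] at *
  linarith

lemma contDiff_eval (p : ℝ[X]) {n : WithTop ℕ∞} : ContDiff ℝ n (fun x => p.eval x) := by
  simpa using p.contDiff_aeval (𝕜 := ℝ) n

lemma deriv_eval (p : ℝ[X]) : deriv (fun x => p.eval x) = fun x => (derivative p).eval x := by
  funext x; exact p.deriv

/-- Induction on the degree: by `cf_rec`, orthogonality to `q` follows from orthogonality to `q'`. -/
lemma cf_eq_zero_aux (d : ℕ) : ∀ (k : ℕ) (q : ℝ[X]), q.natDegree ≤ d → d ≤ k →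
    cf (k + 1) (fun x => q.eval x) = 0 := by
  induction d with
  | zero =>
    intro k q hq _
    have h := cf_rec k (contDiff_eval q)
    rw [deriv_eval, derivative_of_natDegree_zero (by omega)] at h
    simp only [cf, eval_zero, zero_mul, intervalIntegral.integral_zero, sub_zero] at h
    exact (mul_eq_zero.mp h).resolve_left (by positivity)
  | succ d ih =>
    intro k q hq hk
    obtain ⟨k, rfl⟩ : ∃ k', k = k' + 1 := ⟨k - 1, by omega⟩
    have h := cf_rec (k + 1) (contDiff_eval q)
    have hd : (derivative q).natDegree ≤ d := (natDegree_derivative_le q).trans (by omega)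
    rw [deriv_eval, ih k _ hd (by omega), ih (k + 2) _ hd (by omega), sub_zero] at h
    exact (mul_eq_zero.mp h).resolve_left (by positivity)

/-- `P_k` is orthogonal to every polynomial of lower degree. -/
lemma cf_eq_zero {k : ℕ} {q : ℝ[X]} (hq : q.degree < k) : cf k (fun x => q.eval x) = 0 := by
  by_cases h0 : q = 0
  · simp [cf, h0]
  have := (natDegree_lt_iff_degree_lt h0).mpr hq
  obtain ⟨k, rfl⟩ : ∃ k', k = k' + 1 := ⟨k - 1, by omega⟩
  exact cf_eq_zero_aux k k q (by omega) le_rfl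

lemma degree_legPoly_le (k : ℕ) : (legPoly k).degree ≤ k :=
  natDegree_le_iff_degree_le.mp (natDegree_legPoly_le k)

lemma degree_derivative_lt_of_lt {p : ℝ[X]} {k : ℕ} (h : p.degree < (k + 1 : ℕ)) :
    (derivative p).degree < k := by
  by_cases h0 : derivative p = 0
  · rw [h0, degree_zero]; exact WithBot.bot_lt_coe k
  have hp : p ≠ 0 := by rintro rfl; simp at h0
  rw [← natDegree_lt_iff_degree_lt hp] at h
  rw [← natDegree_lt_iff_degree_lt h0]
  by_cases hk : p.natDegree = 0
  · exact absurd (derivative_of_natDegree_zero hk) h0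
  have := natDegree_derivative_lt hk
  omega

/-- Normalisation of the Legendre polynomials, from integration by parts: the boundary terms of
`∫ P_k P_{k+1}'` contribute `2`, and `cf_rec` turns this into `‖P_{k+1}‖²`. -/
lemma cf_self (k : ℕ) : cf k (fun x => (legPoly k).eval x) = 2 / (2 * (k : ℝ) + 1) := by
  have hlt : ∀ i : ℕ, (legPoly i).degree < (i + 1 : ℕ) := fun i =>
    (degree_legPoly_le i).trans_lt (by exact_mod_cast Nat.lt_succ_self i)
  rcases k with _ | k
  · simp [cf, legPoly_zero]; norm_num
  · have h := cf_rec k (contDiff_eval (legPoly (k + 1)))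
    have hd := degree_derivative_lt_of_lt (hlt (k + 1))
    rw [deriv_eval, cf_eq_zero (k := k + 2) (hd.trans (by exact_mod_cast (by omega))), sub_zero] at h
    have h2 := integral_mul_derivative (contDiff_eval (legPoly k)) (legPoly (k + 1))
    have h3 : cf (k + 1) (fun x => (derivative (legPoly k)).eval x) = 0 :=
      cf_eq_zero ((degree_derivative_lt_of_lt (hlt k)).trans (by exact_mod_cast (by omega)))
    have h4 : cf k (fun x => (derivative (legPoly (k + 1))).eval x) = 2 := by
      rw [deriv_eval] at h2
      simp only [cf] at *
      simp_rw [mul_comm (eval _ (derivative (legPoly (k + 1))))]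
      rw [h2, h3]
      simp only [legPoly_eval_one, legPoly_eval_neg_one, ← pow_add]
      rw [show k + (k + 1) = 2 * k + 1 by ring, pow_succ, pow_mul]
      norm_num
    rw [h4] at h
    push_cast
    rw [eq_div_iff (by positivity)]
    linarith

lemma cf_legPoly (k j : ℕ) : cf k (fun x => (legPoly j).eval x)
    = if j = k then 2 / (2 * (k : ℝ) + 1) else 0 := by
  split_ifs with h
  · rw [h, cf_self]
  rcases lt_or_gt_of_ne h with h | h
  · exact cf_eq_zero ((degree_legPoly_le j).trans_lt (by exact_mod_cast h))
  · have := cf_eq_zero ((degree_legPoly_le k).trans_lt (by exact_mod_cast h : (k : WithBot ℕ) < j))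
    rw [← this]
    simp only [cf]
    simp_rw [mul_comm]

lemma coeff_legPoly_ne_zero (k : ℕ) : (legPoly k).coeff k ≠ 0 := by
  intro h
  have h1 : (legPoly k).degree < k := by
    refine lt_of_le_of_ne (degree_legPoly_le k) fun h2 => ?_
    exact (coeff_ne_zero_of_eq_degree h2) h
  have h2 := cf_eq_zero h1
  rw [cf_self] at h2
  have : (0 : ℝ) < 2 / (2 * (k : ℝ) + 1) := by positivity
  linarith

lemma degree_C_mul_le' (a : ℝ) (p : ℝ[X]) : (C a * p).degree ≤ p.degree := by
  rw [C_mul']; exact degree_smul_le a p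

/-- The Legendre polynomials of degree `< M` span the polynomials of degree `< M`. -/
lemma exists_expansion (M : ℕ) : ∀ p : ℝ[X], p.degree < M →
    ∃ a : ℕ → ℝ, p = ∑ k ∈ Finset.range M, C (a k) * legPoly k := by
  induction M with
  | zero => intro p hp; exact ⟨0, by simpa using hp⟩
  | succ M ih =>
    intro p hp
    set b := p.coeff M / (legPoly M).coeff M with hb
    have hle : (p - C b * legPoly M).degree ≤ M := by
      refine (degree_sub_le _ _).trans (max_le ?_ ?_)
      · by_cases h0 : p = 0
        · simp [h0]
        rw [← natDegree_lt_iff_degree_lt h0] at hp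
        exact natDegree_le_iff_degree_le.mp (by omega)
      · exact (degree_C_mul_le' _ _).trans (degree_legPoly_le M)
    have hq : (p - C b * legPoly M).degree < M := by
      refine lt_of_le_of_ne hle fun h2 => coeff_ne_zero_of_eq_degree h2 ?_
      rw [coeff_sub, coeff_C_mul, hb, div_mul_cancel₀ _ (coeff_legPoly_ne_zero M), sub_self]
    obtain ⟨a, ha⟩ := ih _ hq
    refine ⟨fun k => if k < M then a k else b, ?_⟩
    rw [Finset.sum_range_succ]
    simp only [lt_irrefl, if_false]
    rw [← sub_eq_iff_eq_add, ha]
    exact Finset.sum_congr rfl fun k hk => by rw [if_pos (Finset.mem_range.mp hk)]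

/-! ### The Legendre projection and its `L²` error -/

/-- The `L²(-1,1)`-orthogonal projection of `u`onto polynomials of degree `< M`. -/
noncomputable def proj (M : ℕ) (u : ℝ → ℝ) : ℝ[X] :=
  ∑ k ∈ Finset.range M, C ((2 * (k : ℝ) + 1) / 2 * cf k u) * legPoly k

/-- The squared `L²(-1,1)` norm of the `k`-th Legendre component of `u`. -/
noncomputable def nu (k : ℕ) (u : ℝ → ℝ) : ℝ := (2 * (k : ℝ) + 1) / 2 * cf k u ^ 2

/-- The squared `L²(-1,1)` error of the projection onto polynomials of degree `< M`. -/
noncomputable def err (M : ℕ) (u : ℝ → ℝ) : ℝ :=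
  ∫ x in (-1 : ℝ)..1, (u x - (proj M u).eval x) ^ 2

lemma nu_nonneg (k : ℕ) (u : ℝ → ℝ) : 0 ≤ nu k u := by unfold nu; positivity

lemma integral_sq_nonneg (g : ℝ → ℝ) : 0 ≤ ∫ x in (-1 : ℝ)..1, g x ^ 2 :=
  intervalIntegral.integral_nonneg (by norm_num) fun x _ => sq_nonneg (g x)

lemma err_nonneg (M : ℕ) (u : ℝ → ℝ) : 0 ≤ err M u := integral_sq_nonneg _

lemma degree_proj (M : ℕ) (u : ℝ → ℝ) : (proj M u).degree < M := by
  rw [← mem_degreeLT]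
  refine Submodule.sum_mem _ fun k hk => mem_degreeLT.mpr ?_
  exact ((degree_C_mul_le' _ _).trans (degree_legPoly_le k)).trans_lt
    (by exact_mod_cast Finset.mem_range.mp hk)

lemma integral_mul_sum (a : ℕ → ℝ) (M : ℕ) {v : ℝ → ℝ} (hv : Continuous v) :
    ∫ x in (-1 : ℝ)..1, v x * (∑ k ∈ Finset.range M, C (a k) * legPoly k).eval x
      = ∑ k ∈ Finset.range M, a k * cf k v := by
  simp only [eval_finsetSum, Finset.mul_sum, eval_mul, eval_C]
  rw [intervalIntegral.integral_finsetSum]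
  · refine Finset.sum_congr rfl fun k _ => ?_
    rw [cf, ← intervalIntegral.integral_const_mul]
    refine intervalIntegral.integral_congr fun x _ => ?_
    ring
  · intro k _
    exact (hv.mul (continuous_const.mul (legPoly k).continuous)).intervalIntegrable _ _

lemma cf_sum (a : ℕ → ℝ) (M j : ℕ) (hj : j < M) :
    cf j (fun x => (∑ k ∈ Finset.range M, C (a k) * legPoly k).eval x)
      = a j * (2 / (2 * (j : ℝ) + 1)) := by
  simp only [cf]
  simp_rw [mul_comm (eval _ (Finset.sum _ _))]
  rw [integral_mul_sum a M (legPoly j).continuous, Finset.sum_eq_single j]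
  · rw [cf_legPoly, if_pos rfl]
  · intro k _ hk
    rw [cf_legPoly, if_neg (Ne.symm hk), mul_zero]
  · intro h; exact absurd (Finset.mem_range.mpr hj) h

lemma proj_eval {M : ℕ} {p : ℝ[X]} (hp : p.degree < M) : proj M (fun x => p.eval x) = p := by
  obtain ⟨a, rfl⟩ := exists_expansion M p hp
  refine Finset.sum_congr rfl fun k hk => ?_
  rw [cf_sum a M k (Finset.mem_range.mp hk)]
  congr 2
  have : (2 * (k : ℝ) + 1) ≠ 0 := by positivity
  field_simp

lemma cf_proj {M j : ℕ} (hj : j < M) (u : ℝ → ℝ) :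
    cf j (fun x => (proj M u).eval x) = cf j u := by
  rw [proj, cf_sum _ M j hj]
  have : (2 * (j : ℝ) + 1) ≠ 0 := by positivity
  field_simp

lemma proj_sub (M : ℕ) {u v : ℝ → ℝ} (hu : Continuous u) (hv : Continuous v) :
    proj M (fun x => u x - v x) = proj M u - proj M v := by
  simp only [proj, ← Finset.sum_sub_distrib]
  refine Finset.sum_congr rfl fun k _ => ?_
  rw [cf_sub k hu hv, ← sub_mul, ← C_sub, mul_sub]

/-- Pythagoras for the orthogonal projection. -/
lemma err_eq (M : ℕ) {u : ℝ → ℝ} (hu : Continuous u) :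
    err M u = (∫ x in (-1 : ℝ)..1, u x ^ 2) - ∑ k ∈ Finset.range M, nu k u := by
  have hp := (proj M u).continuous
  have h1 : ∫ x in (-1 : ℝ)..1, u x * (proj M u).eval x = ∑ k ∈ Finset.range M, nu k u := by
    rw [proj, integral_mul_sum _ M hu]
    exact Finset.sum_congr rfl fun k _ => by rw [nu]; ring
  have h2 : ∫ x in (-1 : ℝ)..1, (proj M u).eval x * (proj M u).eval x
      = ∑ k ∈ Finset.range M, nu k u := by
    conv_lhs => enter [1, x]; arg 2; rw [proj]
    rw [integral_mul_sum _ M hp]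
    exact Finset.sum_congr rfl fun k hk => by
      rw [nu, cf_proj (Finset.mem_range.mp hk)]; ring
  have h3 : err M u = (∫ x in (-1 : ℝ)..1, u x ^ 2)
      - 2 * (∫ x in (-1 : ℝ)..1, u x * (proj M u).eval x)
      + ∫ x in (-1 : ℝ)..1, (proj M u).eval x * (proj M u).eval x := by
    rw [err, ← intervalIntegral.integral_const_mul, ← intervalIntegral.integral_sub,
      ← intervalIntegral.integral_add]
    · refine intervalIntegral.integral_congr fun x _ => ?_
      ring
    all_goals exact Continuous.intervalIntegrable (by fun_prop) _ _
  rw [h3, h1, h2]; ring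

lemma err_le_integral (M : ℕ) {u : ℝ → ℝ} (hu : Continuous u) :
    err M u ≤ ∫ x in (-1 : ℝ)..1, u x ^ 2 := by
  rw [err_eq M hu]
  have := Finset.sum_nonneg fun k (_ : k ∈ Finset.range M) => nu_nonneg k u
  linarith

lemma integral_sq_poly {M : ℕ} {p : ℝ[X]} (hp : p.degree < M) :
    ∫ x in (-1 : ℝ)..1, p.eval x ^ 2 = ∑ k ∈ Finset.range M, nu k (fun x => p.eval x) := by
  have h := err_eq M p.continuous
  rw [err, proj_eval hp] at h
  simp at h
  linarith

/-- The projection is the best approximation among polynomials of degree `< M`. -/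
lemma err_le_sub (M : ℕ) {u : ℝ → ℝ} (hu : Continuous u) {p : ℝ[X]} (hp : p.degree < M) :
    err M u ≤ ∫ x in (-1 : ℝ)..1, (u x - p.eval x) ^ 2 := by
  have h := err_le_integral M (hu.sub p.continuous)
  simp only [Pi.sub_apply] at h
  refine le_trans (le_of_eq ?_) h
  have h2 := proj_sub M hu p.continuous
  rw [proj_eval hp] at h2
  simp only [err]
  change _ = ∫ x in (-1 : ℝ)..1, (u x - p.eval x - (proj M (fun x => u x - p.eval x)).eval x) ^ 2
  rw [h2]
  simp

/-- Completeness of the Legendre polynomials, from the Weierstrass approximation theorem. -/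
lemma exists_err_le {u : ℝ → ℝ} (hu : Continuous u) {ε : ℝ} (hε : 0 < ε) (M : ℕ) :
    ∃ K, M ≤ K ∧ err K u ≤ ε := by
  obtain ⟨p, hp⟩ := exists_polynomial_near_of_continuousOn (-1) 1 u hu.continuousOn
    (Real.sqrt (ε / 2)) (by positivity)
  refine ⟨M + p.natDegree + 1, by omega, (err_le_sub _ hu (p := p) ?_).trans ?_⟩
  · exact degree_le_natDegree.trans_lt (by exact_mod_cast (by omega))
  · have : ∫ x in (-1 : ℝ)..1, (u x - p.eval x) ^ 2 ≤ ∫ x in (-1 : ℝ)..1, ε / 2 := by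
      refine intervalIntegral.integral_mono_on (by norm_num)
        (Continuous.intervalIntegrable (by fun_prop) _ _) (by simp) fun x hx => ?_
      have h1 := hp x hx
      rw [← Real.sq_sqrt (show (0:ℝ) ≤ ε / 2 by positivity)]
      rw [abs_sub_comm] at h1
      exact sq_le_sq' (by linarith [neg_abs_le (u x - p.eval x)]) (by linarith [le_abs_self (u x - p.eval x)])
    refine this.trans (le_of_eq ?_)
    rw [intervalIntegral.integral_const]; norm_num; ring

/-! ### Decay of the `L²` error -/

lemma err_succ (M : ℕ) {u : ℝ → ℝ} (hu : Continuous u) : err (M + 1) u = err M u - nu M u := by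
  rw [err_eq _ hu, err_eq _ hu, Finset.sum_range_succ]; ring

/-- The decay of Legendre components gained from one derivative, a consequence of `cf_rec`. -/
lemma nu_succ_le (k : ℕ) {u : ℝ → ℝ} (hu : ContDiff ℝ 1 u) :
    ((k : ℝ) + 1) ^ 2 * nu (k + 1) u ≤ nu k (deriv u) + nu (k + 2) (deriv u) := by
  have h := cf_rec k hu
  simp only [nu]
  push_cast
  set a := cf k (deriv u)
  set b := cf (k + 2) (deriv u)
  set c := cf (k + 1) u
  have hk : (0 : ℝ) ≤ k := by positivity
  have h2 : (2 * (k : ℝ) + 3) ^ 2 * c ^ 2 = (a - b) ^ 2 := by rw [← h]; ring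
  have h3 : (a - b) ^ 2 ≤ 2 * (a ^ 2 + b ^ 2) := by nlinarith [sq_nonneg (a + b)]
  have h4 : 2 * ((k : ℝ) + 1) ^ 2 ≤ (2 * k + 1) * (2 * k + 3) := by nlinarith
  have h5 : (2 * (k : ℝ) + 3) * (2 * ((k : ℝ) + 1) ^ 2 * ((2 * (k : ℝ) + 3) * c ^ 2))
      ≤ (2 * (k : ℝ) + 3) * (2 * ((2 * (k : ℝ) + 1) * (a ^ 2 + b ^ 2))) := by
    calc (2 * (k : ℝ) + 3) * (2 * ((k : ℝ) + 1) ^ 2 * ((2 * (k : ℝ) + 3) * c ^ 2))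
        = 2 * ((k : ℝ) + 1) ^ 2 * (a - b) ^ 2 := by rw [← h2]; ring
      _ ≤ ((2 * k + 1) * (2 * k + 3)) * (2 * (a ^ 2 + b ^ 2)) := by gcongr
      _ = _ := by ring
  have h6 := le_of_mul_le_mul_left h5 (by positivity)
  nlinarith [sq_nonneg b]

/-- One derivative is worth one power of the degree. The bounds `nu_succ_le` are summed over a finite
block of degrees, and the remaining tail is made small by completeness (`exists_err_le`), which
avoids Parseval's identity for infinite sums. -/
lemma err_succ_le (N : ℕ) {u : ℝ → ℝ} (hu : ContDiff ℝ 1 u) :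
    ((N : ℝ) + 1) ^ 2 * err (N + 1) u ≤ 2 * err N (deriv u) := by
  have hu' := hu.continuous_deriv le_rfl
  have key : ∀ d : ℕ, ((N : ℝ) + 1) ^ 2 * (err (N + 1) u - err (N + 1 + d) u)
      ≤ err N (deriv u) - err (N + d) (deriv u)
        + (err (N + 2) (deriv u) - err (N + 2 + d) (deriv u)) := by
    intro d
    induction d with
    | zero => simp
    | succ d ih =>
      have e1 := err_succ (N + 1 + d) hu.continuous
      have e2 := err_succ (N + d) hu'
      have e3 := err_succ (N + 2 + d) hu'
      have h := nu_succ_le (N + d) hu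
      rw [show N + d + 1 = N + 1 + d by ring, show N + d + 2 = N + 2 + d by ring] at h
      have h2 : ((N : ℝ) + 1) ^ 2 * nu (N + 1 + d) u
          ≤ (((N + d : ℕ) : ℝ) + 1) ^ 2 * nu (N + 1 + d) u := by
        have := nu_nonneg (N + 1 + d) u
        push_cast
        gcongr
        linarith [Nat.cast_nonneg (α := ℝ) d]
      rw [show N + 1 + (d + 1) = N + 1 + d + 1 by ring, show N + (d + 1) = N + d + 1 by ring,
        show N + 2 + (d + 1) = N + 2 + d + 1 by ring, e1, e2, e3]
      linarith
  have hmono : err (N + 2) (deriv u) ≤ err N (deriv u) := by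
    have e1 := err_succ (N + 1) hu'
    have e2 := err_succ N hu'
    linarith [nu_nonneg N (deriv u), nu_nonneg (N + 1) (deriv u)]
  refine le_of_forall_pos_le_add fun ε hε => ?_
  obtain ⟨K, hK, hKe⟩ := exists_err_le hu.continuous
    (show 0 < ε / ((N : ℝ) + 1) ^ 2 by positivity) (N + 1)
  obtain ⟨d, rfl⟩ := Nat.exists_eq_add_of_le hK
  have h := key d
  rw [le_div_iff₀ (by positivity)] at hKe
  linarith [err_nonneg (N + d) (deriv u), err_nonneg (N + 2 + d) (deriv u)]

lemma contDiff_deriv {s : ℕ} {u : ℝ → ℝ} (hu : ContDiff ℝ (s + 1 : ℕ) u) :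
    ContDiff ℝ s (deriv u) := by
  have : ContDiff ℝ ((s : WithTop ℕ∞) + 1) u := by exact_mod_cast hu
  exact (contDiff_succ_iff_deriv.mp this).2.2

lemma contDiff_one_of_succ {s : ℕ} {u : ℝ → ℝ} (hu : ContDiff ℝ (s + 1 : ℕ) u) :
    ContDiff ℝ 1 u := hu.of_le (by exact_mod_cast (by omega : 1 ≤ s + 1))

lemma pow_succ_le_pow {s N : ℕ} (h : s ≤ N) :
    ((N : ℝ) + 1) ^ (2 * s) ≤ 4 ^ s * (N : ℝ) ^ (2 * s) := by
  rcases Nat.eq_zero_or_pos s with rfl | hs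
  · simp
  have hN : (1 : ℝ) ≤ N := by exact_mod_cast (by omega : 1 ≤ N)
  calc ((N : ℝ) + 1) ^ (2 * s) ≤ (2 * (N : ℝ)) ^ (2 * s) := by gcongr; linarith
    _ = 4 ^ s * (N : ℝ) ^ (2 * s) := by rw [mul_pow, pow_mul]; norm_num

/-- The `L²` approximation estimate `‖u - P_M u‖² ≤ C M^{-2s} ‖u^{(s)}‖²`. -/
lemma exists_err_bound (s : ℕ) : ∃ A : ℝ, 0 < A ∧ ∀ M : ℕ, s ≤ M → ∀ u : ℝ → ℝ,
    ContDiff ℝ s u →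
      (M : ℝ) ^ (2 * s) * err M u ≤ A * ∫ x in (-1 : ℝ)..1, iteratedDeriv s u x ^ 2 := by
  induction s with
  | zero =>
    refine ⟨1, one_pos, fun M _ u hu => ?_⟩
    simpa using err_le_integral M hu.continuous
  | succ s ih =>
    obtain ⟨A, hA, h⟩ := ih
    refine ⟨2 * (4 ^ s * A), by positivity, fun M hM u hu => ?_⟩
    obtain ⟨N, rfl⟩ : ∃ N, M = N + 1 := ⟨M - 1, by omega⟩
    have h1 := err_succ_le N (contDiff_one_of_succ hu)
    have h2 := h N (by omega) (deriv u) (contDiff_deriv hu)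
    have h3 := pow_succ_le_pow (show s ≤ N by omega)
    have h4 := err_nonneg N (deriv u)
    have h5 := err_nonneg (N + 1) u
    rw [iteratedDeriv_succ']
    push_cast
    calc ((N : ℝ) + 1) ^ (2 * (s + 1)) * err (N + 1) u
        = ((N : ℝ) + 1) ^ (2 * s) * (((N : ℝ) + 1) ^ 2 * err (N + 1) u) := by ring
      _ ≤ (4 ^ s * (N : ℝ) ^ (2 * s)) * (2 * err N (deriv u)) := by gcongr
      _ = 2 * (4 ^ s * ((N : ℝ) ^ (2 * s) * err N (deriv u))) := by ring
      _ ≤ 2 * (4 ^ s * (A * ∫ x in (-1 : ℝ)..1, iteratedDeriv s (deriv u) x ^ 2)) := by gcongr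
      _ = _ := by ring

/-! ### Markov's inequality -/

/-- `‖P_k'‖² = k (k + 1)`, proved in steps of two via `legPoly_rec`. -/
lemma integral_sq_derivative_legPoly (k : ℕ) :
    ∫ x in (-1 : ℝ)..1, (derivative (legPoly k)).eval x ^ 2 = k * ((k : ℝ) + 1) := by
  induction k using Nat.twoStepInduction with
  | zero => simp [legPoly_zero]
  | one => simp [legPoly_one]
  | more k ih _ =>
    have h0 : cf (k + 1) (fun x => (derivative (legPoly k)).eval x) = 0 :=
      cf_eq_zero ((degree_derivative_lt_of_lt
        ((degree_legPoly_le k).trans_lt (by exact_mod_cast Nat.lt_succ_self k))).trans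
          (by exact_mod_cast (by omega)))
    have h1 := cf_self (k + 1)
    have h : ∫ x in (-1 : ℝ)..1, (derivative (legPoly (k + 2))).eval x ^ 2
        = (2 * (k : ℝ) + 3) ^ 2 * cf (k + 1) (fun x => (legPoly (k + 1)).eval x)
          + 2 * (2 * (k : ℝ) + 3) * cf (k + 1) (fun x => (derivative (legPoly k)).eval x)
          + ∫ x in (-1 : ℝ)..1, (derivative (legPoly k)).eval x ^ 2 := by
      rw [cf, cf, ← intervalIntegral.integral_const_mul, ← intervalIntegral.integral_const_mul,
        ← intervalIntegral.integral_add, ← intervalIntegral.integral_add]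
      · refine intervalIntegral.integral_congr fun x _ => ?_
        simp only [legPoly_rec, eval_add, eval_mul, eval_C]
        ring
      all_goals exact Continuous.intervalIntegrable (by fun_prop) _ _
    rw [h, h0, h1, ih]
    push_cast
    have : (2 * ((k : ℝ) + 1) + 1) ≠ 0 := by positivity
    field_simp
    ring

/-- Markov's inequality in `L²`. -/
lemma integral_sq_derivative_le {M : ℕ} {p : ℝ[X]} (hp : p.degree < M) :
    ∫ x in (-1 : ℝ)..1, (derivative p).eval x ^ 2
      ≤ (M : ℝ) ^ 4 * ∫ x in (-1 : ℝ)..1, p.eval x ^ 2 := by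
  rw [integral_sq_poly hp]
  set q : ℝ → ℝ := fun x => p.eval x with hq
  set S := ∑ k ∈ Finset.range M, nu k q with hS
  have hS0 : 0 ≤ S := Finset.sum_nonneg fun k _ => nu_nonneg k q
  have hder : ∀ x, (derivative p).eval x = ∑ k ∈ Finset.range M,
      (2 * (k : ℝ) + 1) / 2 * cf k q * (derivative (legPoly k)).eval x := by
    intro x
    conv_lhs => rw [← proj_eval hp, proj]
    simp [eval_finsetSum, hq]
  -- Cauchy-Schwarz for the expansion of `p'` in the polynomials `P_k'`.
  have hpt : ∀ x, (derivative p).eval x ^ 2 ≤ S * ∑ k ∈ Finset.range M,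
      (2 * (k : ℝ) + 1) / 2 * (derivative (legPoly k)).eval x ^ 2 := by
    intro x
    rw [hder, hS]
    refine Finset.sum_sq_le_sum_mul_sum_of_sq_le_mul _ (fun k _ => nu_nonneg k q)
      (fun k _ => by positivity) fun k _ => ?_
    rw [nu]; exact le_of_eq (by ring)
  have hint : ∫ x in (-1 : ℝ)..1, (S * ∑ k ∈ Finset.range M,
      (2 * (k : ℝ) + 1) / 2 * (derivative (legPoly k)).eval x ^ 2)
      = S * ∑ k ∈ Finset.range M, (2 * (k : ℝ) + 1) / 2 * (k * ((k : ℝ) + 1)) := by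
    rw [intervalIntegral.integral_const_mul, intervalIntegral.integral_finsetSum]
    · simp_rw [intervalIntegral.integral_const_mul, integral_sq_derivative_legPoly]
    · intro k _
      exact Continuous.intervalIntegrable (by fun_prop) _ _
  have hsum : ∑ k ∈ Finset.range M, (2 * (k : ℝ) + 1) / 2 * (k * ((k : ℝ) + 1)) ≤ (M : ℝ) ^ 4 := by
    refine (Finset.sum_le_card_nsmul _ _ ((M : ℝ) ^ 3) fun k hk => ?_).trans (le_of_eq ?_)
    · have h1 : (k : ℝ) + 1 ≤ M := by exact_mod_cast Finset.mem_range.mp hk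
      have h0 : (0 : ℝ) ≤ k := by positivity
      calc (2 * (k : ℝ) + 1) / 2 * (k * ((k : ℝ) + 1))
          ≤ (k + 1) * ((k + 1) * ((k : ℝ) + 1)) := by gcongr <;> linarith
        _ = ((k : ℝ) + 1) ^ 3 := by ring
        _ ≤ _ := by gcongr
    · simp; ring
  calc ∫ x in (-1 : ℝ)..1, (derivative p).eval x ^ 2
      ≤ ∫ x in (-1 : ℝ)..1, (S * ∑ k ∈ Finset.range M,
        (2 * (k : ℝ) + 1) / 2 * (derivative (legPoly k)).eval x ^ 2) :=
        intervalIntegral.integral_mono_on (by norm_num)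
          (Continuous.intervalIntegrable (by fun_prop) _ _)
          (Continuous.intervalIntegrable (by fun_prop) _ _) fun x _ => hpt x
    _ ≤ (M : ℝ) ^ 4 * S := by rw [hint, mul_comm]; gcongr

lemma integral_sq_iterate_derivative_le {M : ℕ} {p : ℝ[X]} (hp : p.degree < M) (j : ℕ) :
    ∫ x in (-1 : ℝ)..1, (derivative^[j] p).eval x ^ 2
      ≤ (M : ℝ) ^ (4 * j) * ∫ x in (-1 : ℝ)..1, p.eval x ^ 2 := by
  induction j generalizing p with
  | zero => simp
  | succ j ih =>
    have hd : (derivative p).degree < M := (degree_derivative_le).trans_lt hp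
    rw [Function.iterate_succ_apply]
    calc _ ≤ (M : ℝ) ^ (4 * j) * ((M : ℝ) ^ 4 * ∫ x in (-1 : ℝ)..1, p.eval x ^ 2) :=
          (ih hd).trans (by gcongr; exact integral_sq_derivative_le hp)
      _ = _ := by ring

/-! ### The commutator of projection and differentiation -/

/-- The projection error is orthogonal to all polynomials of degree `< M`. -/
lemma integral_err_mul {M : ℕ} {u : ℝ → ℝ} (hu : Continuous u) {p : ℝ[X]} (hp : p.degree < M) :
    ∫ x in (-1 : ℝ)..1, (u x - (proj M u).eval x) * p.eval x = 0 := by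
  obtain ⟨a, rfl⟩ := exists_expansion M p hp
  rw [integral_mul_sum a M (v := fun x => u x - (proj M u).eval x)
    (hu.sub (proj M u).continuous)]
  refine Finset.sum_eq_zero fun k hk => ?_
  rw [cf_sub k hu (proj M u).continuous, cf_proj (Finset.mem_range.mp hk), sub_self, mul_zero]

lemma deriv_err (M : ℕ) {u : ℝ → ℝ} (hu : ContDiff ℝ 1 u) :
    deriv (fun x => u x - (proj M u).eval x)
      = fun x => deriv u x - (derivative (proj M u)).eval x := by
  funext x
  rw [deriv_fun_sub (hu.differentiable one_ne_zero x) (proj M u).differentiableAt, Polynomial.deriv]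

/-- The commutator of projection and differentiation. Each of its first `M` Legendre coefficients
is a signed sum of the endpoint values of the projection error, and those are controlled by just two
Legendre coefficients of `u'`; this is where the half power of `M` is gained. -/
lemma integral_sq_commutator_le (N : ℕ) {u : ℝ → ℝ} (hu : ContDiff ℝ 1 u) :
    ∫ x in (-1 : ℝ)..1, (proj (N + 1) (deriv u) - derivative (proj (N + 1) u)).eval x ^ 2
      ≤ ((N : ℝ) + 1) * err N (deriv u) := by
  have hu' := hu.continuous_deriv le_rfl
  set p := proj (N + 1) u with hpdef
  set e : ℝ → ℝ := fun x => u x - p.eval x with he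
  have heC : ContDiff ℝ 1 e := hu.sub (contDiff_eval p)
  have hdp : (derivative p).degree < N := degree_derivative_lt_of_lt (degree_proj (N + 1) u)
  have hend : ∀ k, k ≤ N + 1 → cf k (deriv u) - cf k (fun x => (derivative p).eval x)
      = e 1 - (-1) ^ k * e (-1) := by
    intro k hk
    have h1 := integral_mul_derivative heC (legPoly k)
    have h2 : ∫ x in (-1 : ℝ)..1, e x * (derivative (legPoly k)).eval x = 0 :=
      integral_err_mul hu.continuous ((degree_derivative_lt_of_lt
        ((degree_legPoly_le k).trans_lt (by exact_mod_cast Nat.lt_succ_self k))).trans_le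
          (by exact_mod_cast hk))
    rw [← cf_sub k hu' (derivative p).continuous, ← deriv_err (N + 1) hu]
    rw [h2, legPoly_eval_one, legPoly_eval_neg_one] at h1
    rw [cf]
    linarith
  -- As `(P_M u)'` has degree `< N`, taking `k = N` and `k = N + 1` recovers both endpoint values
  -- from the coefficients of `u'` alone.
  have hN := hend N (by omega)
  have hN1 := hend (N + 1) le_rfl
  rw [cf_eq_zero hdp, sub_zero] at hN
  rw [cf_eq_zero (hdp.trans (by exact_mod_cast Nat.lt_succ_self N)), sub_zero] at hN1
  have hs : ∀ k : ℕ, ((-1 : ℝ) ^ k) ^ 2 = 1 := fun k => by rw [← pow_mul, mul_comm, pow_mul]; simp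
  have hends : (2 * (N : ℝ) + 1) * (e 1 ^ 2 + e (-1) ^ 2) ≤ err N (deriv u) := by
    have e1 := err_succ (N + 1) hu'
    have e2 := err_succ N hu'
    have h0 := err_nonneg (N + 1 + 1) (deriv u)
    have n1 : nu N (deriv u) = (2 * (N : ℝ) + 1) / 2 * (e 1 - (-1) ^ N * e (-1)) ^ 2 := by
      rw [nu, hN]
    have n2 : (2 * (N : ℝ) + 1) / 2 * (e 1 + (-1) ^ N * e (-1)) ^ 2 ≤ nu (N + 1) (deriv u) := by
      rw [nu, hN1, pow_succ (-1 : ℝ)]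
      push_cast
      rw [show e 1 - (-1) ^ N * -1 * e (-1) = e 1 + (-1) ^ N * e (-1) by ring]
      gcongr
      linarith
    have h3 : (2 * (N : ℝ) + 1) / 2 * (e 1 - (-1) ^ N * e (-1)) ^ 2
        + (2 * (N : ℝ) + 1) / 2 * (e 1 + (-1) ^ N * e (-1)) ^ 2
        = (2 * (N : ℝ) + 1) * (e 1 ^ 2 + ((-1) ^ N) ^ 2 * e (-1) ^ 2) := by ring
    rw [hs, one_mul] at h3
    linarith
  have hD : (proj (N + 1) (deriv u) - derivative p).degree < (N + 1 : ℕ) :=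
    (degree_sub_le _ _).trans_lt (max_lt (degree_proj _ _)
      (hdp.trans (by exact_mod_cast Nat.lt_succ_self N)))
  rw [integral_sq_poly hD]
  have hterm : ∀ k ∈ Finset.range (N + 1),
      nu k (fun x => (proj (N + 1) (deriv u) - derivative p).eval x)
        ≤ (2 * (k : ℝ) + 1) * (e 1 ^ 2 + e (-1) ^ 2) := by
    intro k hk
    have hk' := Finset.mem_range.mp hk
    have hc : cf k (fun x => (proj (N + 1) (deriv u) - derivative p).eval x)
        = e 1 - (-1) ^ k * e (-1) := by
      rw [← hend k hk'.le]
      simp only [eval_sub]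
      rw [cf_sub k (proj _ _).continuous (derivative p).continuous, cf_proj hk']
    have h2 : (e 1 - (-1) ^ k * e (-1)) ^ 2 ≤ 2 * (e 1 ^ 2 + e (-1) ^ 2) := by
      have h3 : 2 * (e 1 ^ 2 + ((-1) ^ k) ^ 2 * e (-1) ^ 2) - (e 1 - (-1) ^ k * e (-1)) ^ 2
        = (e 1 + (-1) ^ k * e (-1)) ^ 2 := by ring
      rw [hs, one_mul] at h3
      linarith [sq_nonneg (e 1 + (-1) ^ k * e (-1))]
    rw [nu, hc]
    calc (2 * (k : ℝ) + 1) / 2 * (e 1 - (-1) ^ k * e (-1)) ^ 2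
        ≤ (2 * (k : ℝ) + 1) / 2 * (2 * (e 1 ^ 2 + e (-1) ^ 2)) := by gcongr
      _ = _ := by ring
  refine (Finset.sum_le_sum hterm).trans ?_
  have hodd : ∀ n : ℕ, ∑ k ∈ Finset.range n, (2 * (k : ℝ) + 1) = (n : ℝ) ^ 2 := by
    intro n
    induction n with
    | zero => simp
    | succ n ih => rw [Finset.sum_range_succ, ih]; push_cast; ring
  rw [← Finset.sum_mul, hodd]
  push_cast
  have hNN : (0 : ℝ) ≤ N := by positivity
  calc ((N : ℝ) + 1) ^ 2 * (e 1 ^ 2 + e (-1) ^ 2)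
      = ((N : ℝ) + 1) * (((N : ℝ) + 1) * (e 1 ^ 2 + e (-1) ^ 2)) := by ring
    _ ≤ ((N : ℝ) + 1) * ((2 * (N : ℝ) + 1) * (e 1 ^ 2 + e (-1) ^ 2)) := by gcongr; linarith
    _ ≤ _ := by gcongr

/-! ### Derivatives of the error on the reference interval -/

/-- The error bound for derivatives of order `j + 1`, deduced from the bound in order `j` by splitting
`(u - P_M u)' = (u' - P_M u') + (P_M u' - (P_M u)')`. The second term is a polynomial, handled by
Markov's inequality. The conclusion has one power of `M` more on the left than the hypothesis with
`j, s` replaced by `j + 1, s + 1`. -/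
lemma exists_deriv_bound_step {j s : ℕ} (hjs : j ≤ s)
    (ih : ∃ A : ℝ, 0 < A ∧ ∀ M : ℕ, s ≤ M → ∀ u : ℝ → ℝ, ContDiff ℝ s u →
      (M : ℝ) ^ (2 * s) * ∫ x in (-1 : ℝ)..1,
          iteratedDeriv j (fun y => u y - (proj M u).eval y) x ^ 2
        ≤ A * (M : ℝ) ^ (4 * j) * ∫ x in (-1 : ℝ)..1, iteratedDeriv s u x ^ 2) :
    ∃ A : ℝ, 0 < A ∧ ∀ M : ℕ, s + 1 ≤ M → ∀ u : ℝ → ℝ, ContDiff ℝ (s + 1 : ℕ) u →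
      (M : ℝ) ^ (2 * (s + 1) + 1) * ∫ x in (-1 : ℝ)..1,
          iteratedDeriv (j + 1) (fun y => u y - (proj M u).eval y) x ^ 2
        ≤ A * (M : ℝ) ^ (4 * (j + 1)) * ∫ x in (-1 : ℝ)..1, iteratedDeriv (s + 1) u x ^ 2 := by
  obtain ⟨A, hA, h⟩ := ih
  obtain ⟨B, hB, hE⟩ := exists_err_bound s
  refine ⟨2 * (A + 4 ^ s * B), by positivity, fun M hM u hu => ?_⟩
  have hM1 : (1 : ℝ) ≤ M := by exact_mod_cast (by omega : 1 ≤ M)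
  have hu1 := contDiff_one_of_succ hu
  have hv := contDiff_deriv hu
  have hvj : ContDiff ℝ j (deriv u) := hv.of_le (by exact_mod_cast hjs)
  rw [iteratedDeriv_succ' (n := s)]
  set v := deriv u with hvdef
  set D := proj M v - derivative (proj M u) with hD
  set Y := ∫ x in (-1 : ℝ)..1, iteratedDeriv s v x ^ 2 with hY
  have hY0 : 0 ≤ Y := integral_sq_nonneg _
  have hgC : ContDiff ℝ j (fun y => v y - (proj M v).eval y) := hvj.sub (contDiff_eval _)
  have hDC : ContDiff ℝ j (fun y => D.eval y) := contDiff_eval _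
  have hsplit : ∀ x, iteratedDeriv (j + 1) (fun y => u y - (proj M u).eval y) x
      = iteratedDeriv j (fun y => v y - (proj M v).eval y) x + (derivative^[j] D).eval x := by
    intro x
    rw [iteratedDeriv_succ', deriv_err M hu1]
    have : (fun x => deriv u x - (derivative (proj M u)).eval x)
        = fun x => (v x - (proj M v).eval x) + D.eval x := by
      funext x; simp [hD, hvdef]
    rw [this, iteratedDeriv_fun_add hgC.contDiffAt hDC.contDiffAt, iteratedDeriv_eval D]
  have hc1 := hgC.continuous_iteratedDeriv j le_rfl
  have hle : ∫ x in (-1 : ℝ)..1, iteratedDeriv (j + 1) (fun y => u y - (proj M u).eval y) x ^ 2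
      ≤ 2 * (∫ x in (-1 : ℝ)..1, iteratedDeriv j (fun y => v y - (proj M v).eval y) x ^ 2)
        + 2 * ∫ x in (-1 : ℝ)..1, (derivative^[j] D).eval x ^ 2 := by
    simp_rw [hsplit]
    rw [← intervalIntegral.integral_const_mul, ← intervalIntegral.integral_const_mul,
      ← intervalIntegral.integral_add]
    · refine intervalIntegral.integral_mono_on (by norm_num)
        (Continuous.intervalIntegrable (by fun_prop) _ _)
        (Continuous.intervalIntegrable (by fun_prop) _ _) fun x _ => ?_
      nlinarith [sq_nonneg (iteratedDeriv j (fun y => v y - (proj M v).eval y) x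
        - (derivative^[j] D).eval x)]
    all_goals exact Continuous.intervalIntegrable (by fun_prop) _ _
  have h1 := h M (by omega) v hv
  have hDdeg : D.degree < M := (degree_sub_le _ _).trans_lt
    (max_lt (degree_proj _ _) ((degree_derivative_le).trans_lt (degree_proj _ _)))
  have h2 := integral_sq_iterate_derivative_le hDdeg j
  have h3 : ∫ x in (-1 : ℝ)..1, D.eval x ^ 2 ≤ (M : ℝ) * err (M - 1) v := by
    obtain ⟨N, rfl⟩ : ∃ N, M = N + 1 := ⟨M - 1, by omega⟩
    have := integral_sq_commutator_le N hu1
    rw [Nat.add_sub_cancel]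
    push_cast
    exact this
  have h4 : (M : ℝ) ^ (2 * s) * err (M - 1) v ≤ 4 ^ s * B * Y := by
    obtain ⟨N, rfl⟩ : ∃ N, M = N + 1 := ⟨M - 1, by omega⟩
    have h5 := pow_succ_le_pow (show s ≤ N by omega)
    have h6 := hE N (by omega) v hv
    have h7 := err_nonneg N v
    rw [Nat.add_sub_cancel]
    push_cast
    calc ((N : ℝ) + 1) ^ (2 * s) * err N v ≤ 4 ^ s * (N : ℝ) ^ (2 * s) * err N v := by gcongr
      _ = 4 ^ s * ((N : ℝ) ^ (2 * s) * err N v) := by ring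
      _ ≤ 4 ^ s * (B * Y) := by gcongr
      _ = _ := by ring
  set I1 := ∫ x in (-1 : ℝ)..1, iteratedDeriv j (fun y => v y - (proj M v).eval y) x ^ 2
  have hI1 : 0 ≤ I1 := integral_sq_nonneg _
  set I2 := ∫ x in (-1 : ℝ)..1, (derivative^[j] D).eval x ^ 2
  have h8 : I2 ≤ (M : ℝ) ^ (4 * j) * ((M : ℝ) * err (M - 1) v) := h2.trans (by gcongr)
  calc _ ≤ (M : ℝ) ^ (2 * (s + 1) + 1) * (2 * I1
        + 2 * ((M : ℝ) ^ (4 * j) * ((M : ℝ) * err (M - 1) v))) := by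
        gcongr; exact hle.trans (by linarith)
    _ = 2 * ((M : ℝ) ^ 3 * ((M : ℝ) ^ (2 * s) * I1)
        + (M : ℝ) ^ (4 * (j + 1)) * ((M : ℝ) ^ (2 * s) * err (M - 1) v)) := by ring
    _ ≤ 2 * ((M : ℝ) ^ 4 * (A * (M : ℝ) ^ (4 * j) * Y)
        + (M : ℝ) ^ (4 * (j + 1)) * (4 ^ s * B * Y)) := by
        gcongr
        norm_num
    _ = _ := by ring

/-- The bound in every order `j ≤ s`, without the additional factor `M` on the left. -/
lemma exists_deriv_bound_weak (j : ℕ) : ∀ s : ℕ, j ≤ s →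
    ∃ A : ℝ, 0 < A ∧ ∀ M : ℕ, s ≤ M → ∀ u : ℝ → ℝ, ContDiff ℝ s u →
      (M : ℝ) ^ (2 * s) * ∫ x in (-1 : ℝ)..1,
          iteratedDeriv j (fun y => u y - (proj M u).eval y) x ^ 2
        ≤ A * (M : ℝ) ^ (4 * j) * ∫ x in (-1 : ℝ)..1, iteratedDeriv s u x ^ 2 := by
  induction j with
  | zero =>
    intro s _
    obtain ⟨A, hA, h⟩ := exists_err_bound s
    exact ⟨A, hA, fun M hM u hu => by simpa [err] using h M hM u hu⟩
  | succ j ih =>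
    intro s hs
    obtain ⟨s, rfl⟩ : ∃ t, s = t + 1 := ⟨s - 1, by omega⟩
    obtain ⟨A, hA, h⟩ := exists_deriv_bound_step (by omega) (ih s (by omega))
    refine ⟨A, hA, fun M hM u hu => le_trans ?_ (h M hM u hu)⟩
    have hM1 : (1 : ℝ) ≤ M := by exact_mod_cast (by omega : 1 ≤ M)
    have := integral_sq_nonneg (iteratedDeriv (j + 1) (fun y => u y - (proj M u).eval y))
    gcongr
    omega

/-- The bound with the additional factor `M`. For `j ≥ 1` it comes from `exists_deriv_bound_step`; for
`j = 0` it holds because `r ≥ 1` makes `M ^ (4 * r)` absorb that factor. The condition `j ≤ s` stands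
inside the existential so that a constant can be chosen for all pairs `j, s` at once. -/
lemma exists_deriv_bound (j s : ℕ) :
    ∃ A : ℝ, 0 < A ∧ (j ≤ s → ∀ M : ℕ, 1 ≤ M → s ≤ M → ∀ r : ℕ, 1 ≤ r → j ≤ r →
      ∀ u : ℝ → ℝ, ContDiff ℝ s u →
      (M : ℝ) ^ (2 * s + 1) * ∫ x in (-1 : ℝ)..1,
          iteratedDeriv j (fun y => u y - (proj M u).eval y) x ^ 2
        ≤ A * (M : ℝ) ^ (4 * r) * ∫ x in (-1 : ℝ)..1, iteratedDeriv s u x ^ 2) := by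
  by_cases hjs : j ≤ s
  swap
  · exact ⟨1, one_pos, fun h => absurd h hjs⟩
  rcases j with _ | j
  · obtain ⟨A, hA, h⟩ := exists_deriv_bound_weak 0 s (by omega)
    refine ⟨A, hA, fun _ M hM1 hM r hr _ u hu => ?_⟩
    have h1 := h M hM u hu
    have hM1' : (1 : ℝ) ≤ M := by exact_mod_cast hM1
    have h0 := integral_sq_nonneg (iteratedDeriv s u)
    rw [pow_succ', mul_assoc]
    calc _ ≤ (M : ℝ) * (A * (M : ℝ) ^ (4 * 0) * ∫ x in (-1 : ℝ)..1, iteratedDeriv s u x ^ 2) := by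
          gcongr
      _ = A * (M : ℝ) ^ 1 * ∫ x in (-1 : ℝ)..1, iteratedDeriv s u x ^ 2 := by ring
      _ ≤ _ := by
          gcongr
          omega
  · obtain ⟨s, rfl⟩ : ∃ t, s = t + 1 := ⟨s - 1, by omega⟩
    obtain ⟨A, hA, h⟩ :=
      exists_deriv_bound_step (by omega) (exists_deriv_bound_weak j s (by omega))
    refine ⟨A, hA, fun _ M hM1 hM r hr hjr u hu => (h M hM u hu).trans ?_⟩
    have hM1' : (1 : ℝ) ≤ M := by exact_mod_cast hM1
    have h0 := integral_sq_nonneg (iteratedDeriv (s + 1) u)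
    gcongr

/-- The estimate on the reference interval `(-1,1)`, for all degrees at once. When `M < m` the
order `max j (min m M)` of the controlling derivative may be smaller than `m`; the missing powers of
`M` are then bounded by powers of `m`. -/
lemma exists_reference_bound (m r : ℕ) (hm : 1 ≤ m) (hr : 1 ≤ r) (hrm : r ≤ m) :
    ∃ A : ℝ, 0 < A ∧ ∀ M : ℕ, 1 ≤ M → ∀ j ≤ r, ∀ u : ℝ → ℝ, ContDiff ℝ m u →
      (M : ℝ) ^ (2 * m + 1) * ∫ x in (-1 : ℝ)..1,
          iteratedDeriv j (fun y => u y - (proj M u).eval y) x ^ 2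
        ≤ A * (M : ℝ) ^ (4 * r) *
          ∫ x in (-1 : ℝ)..1, iteratedDeriv (max j (min m M)) u x ^ 2 := by
  choose A hA h using exists_deriv_bound
  set S := ∑ j ∈ Finset.range (m + 1), ∑ s ∈ Finset.range (m + 1), A j s with hS
  have hAS : ∀ j ≤ m, ∀ s ≤ m, A j s ≤ S := by
    intro j hj s hs
    refine (Finset.single_le_sum (f := fun s => A j s) (fun i _ => (hA j i).le)
      (Finset.mem_range.mpr (show s < m + 1 by omega))).trans ?_
    exact Finset.single_le_sum (f := fun j => ∑ s ∈ Finset.range (m + 1), A j s)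
      (fun i _ => Finset.sum_nonneg fun s _ => (hA i s).le)
      (Finset.mem_range.mpr (show j < m + 1 by omega))
  have hS0 : 0 < S := (hA 0 0).trans_le (hAS 0 (by omega) 0 (by omega))
  have hm1 : (1 : ℝ) ≤ m := by exact_mod_cast hm
  refine ⟨(m : ℝ) ^ (2 * m + 1) * (S + 1), by positivity, fun M hM j hj u hu => ?_⟩
  have hM1 : (1 : ℝ) ≤ M := by exact_mod_cast hM
  have hX0 := integral_sq_nonneg (iteratedDeriv j (fun y => u y - (proj M u).eval y))
  have hY0 := integral_sq_nonneg (iteratedDeriv (max j (min m M)) u)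
  rcases le_or_gt j (min m M) with hjs | hjs
  · rw [max_eq_right hjs] at hY0 ⊢
    set s := min m M with hs
    have hsm : s ≤ m := min_le_left _ _
    have h1 := h j s hjs M hM (min_le_right _ _) r hr hj u (hu.of_le (by exact_mod_cast hsm))
    have h2 : (M : ℝ) ^ (2 * m - 2 * s) ≤ (m : ℝ) ^ (2 * m + 1) := by
      rcases le_or_gt m M with hmM | hmM
      · rw [show s = m by omega, Nat.sub_self, pow_zero]
        exact one_le_pow₀ hm1
      · calc (M : ℝ) ^ (2 * m - 2 * s) ≤ (m : ℝ) ^ (2 * m - 2 * s) := by gcongr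
          _ ≤ _ := pow_le_pow_right₀ hm1 (by omega)
    rw [show 2 * m + 1 = (2 * m - 2 * s) + (2 * s + 1) by omega, pow_add, mul_assoc]
    rw [show (2 * m - 2 * s) + (2 * s + 1) = 2 * m + 1 by omega]
    have h3 : A j s ≤ S + 1 := by linarith [hAS j (by omega) s hsm]
    calc _ ≤ (m : ℝ) ^ (2 * m + 1) * ((S + 1) * (M : ℝ) ^ (4 * r) *
          ∫ x in (-1 : ℝ)..1, iteratedDeriv s u x ^ 2) := by
          refine mul_le_mul h2 (h1.trans ?_) (by positivity) (by positivity)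
          gcongr
      _ = _ := by ring
  · -- Here `M < j`, so the projection is a polynomial killed by `j` derivatives.
    rw [max_eq_left hjs.le] at hY0 ⊢
    have hMj : M < j := by omega
    have hMm : (M : ℝ) ≤ m := by exact_mod_cast (by omega : M ≤ m)
    have hju : ContDiff ℝ j u := hu.of_le (by exact_mod_cast (by omega : j ≤ m))
    have heq : ∀ x, iteratedDeriv j (fun y => u y - (proj M u).eval y) x = iteratedDeriv j u x := by
      intro x
      rw [iteratedDeriv_fun_sub hju.contDiffAt (contDiff_eval _).contDiffAt, iteratedDeriv_eval,
        iterate_derivative_eq_zero_of_degree_lt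
          ((degree_proj M u).trans (by exact_mod_cast hMj))]
      simp
    simp_rw [heq]
    have h1 : (1 : ℝ) ≤ (M : ℝ) ^ (4 * r) := one_le_pow₀ hM1
    calc _ ≤ (m : ℝ) ^ (2 * m + 1) * 1 * 1 * ∫ x in (-1 : ℝ)..1, iteratedDeriv j u x ^ 2 := by
          rw [mul_one, mul_one]; gcongr
      _ ≤ (m : ℝ) ^ (2 * m + 1) * (S + 1) * (M : ℝ) ^ (4 * r) *
          ∫ x in (-1 : ℝ)..1, iteratedDeriv j u x ^ 2 := by
          gcongr; linarith

/-! ### Rescaling to the subintervals -/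

/-- The function `f` on the `n`-th subinterval of level `k`, transplanted to the reference
interval `(-1,1)`. -/
noncomputable def pullback (l : ℝ) (k n : ℕ) (f : ℝ → ℝ) : ℝ → ℝ :=
  fun y => f ((y + (2 * (n : ℝ) - 1)) * (l / 2 ^ k))

lemma pullback_apply {l : ℝ} (hl : 0 < l) (k n : ℕ) (f : ℝ → ℝ) (x : ℝ) :
    pullback l k n f ((2 : ℝ) ^ k / l * x + (1 - 2 * (n : ℝ))) = f x := by
  rw [pullback]
  congr 1
  field_simp
  ring

lemma contDiff_pullback {l : ℝ} {k n j : ℕ} {f : ℝ → ℝ} (hf : ContDiff ℝ j f) :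
    ContDiff ℝ j (pullback l k n f) := by
  unfold pullback
  fun_prop

lemma two_pow_pred {k : ℕ} (hk : 1 ≤ k) : (2 : ℝ) ^ k = 2 * 2 ^ (k - 1) := by
  rw [← pow_succ', Nat.sub_add_cancel hk]

lemma iteratedDeriv_comp_affine {j : ℕ} {g : ℝ → ℝ} (hg : ContDiff ℝ j g) (c d x : ℝ) :
    iteratedDeriv j (fun x => g (c * x + d)) x = c ^ j * iteratedDeriv j g (c * x + d) := by
  have h1 : ContDiff ℝ j (fun x => g (x + d)) := by fun_prop
  have h2 := congrFun (iteratedDeriv_comp_const_mul h1 c) x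
  rw [iteratedDeriv_comp_add_const] at h2
  exact h2

/-- Change of variables from the `n`-th subinterval to the reference interval. -/
lemma integral_piece {l : ℝ} (hl : 0 < l) {k : ℕ} (hk : 1 ≤ k) (n : ℕ) (h : ℝ → ℝ) :
    ∫ x in (((n : ℝ) - 1) * l / 2 ^ (k - 1))..((n : ℝ) * l / 2 ^ (k - 1)),
        h ((2 : ℝ) ^ k / l * x + (1 - 2 * (n : ℝ)))
      = l / 2 ^ k * ∫ y in (-1 : ℝ)..1, h y := by
  rw [intervalIntegral.integral_comp_mul_add h (by positivity), smul_eq_mul, inv_div]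
  have h2 : (2 : ℝ) ^ (k - 1) ≠ 0 := by positivity
  congr 2 <;>
  · rw [two_pow_pred hk]
    field_simp
    ring

lemma piece_le {l : ℝ} (hl : 0 < l) (k n : ℕ) :
    ((n : ℝ) - 1) * l / 2 ^ (k - 1) ≤ (n : ℝ) * l / 2 ^ (k - 1) := by
  gcongr
  linarith

lemma legWavelet_of_mem {l : ℝ} {k n m : ℕ} {x : ℝ}
    (hx : x ∈ Set.Ico (((n : ℝ) - 1) * l / 2 ^ (k - 1)) ((n : ℝ) * l / 2 ^ (k - 1))) :
    legWavelet l k n m x = (2 : ℝ) ^ ((k : ℝ) / 2) * Real.sqrt ((2 * (m : ℝ) + 1) / (2 * l)) *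
      (legPoly m).eval ((2 : ℝ) ^ k / l * x + (1 - 2 * (n : ℝ))) := by
  rw [legWavelet, if_pos ⟨hx.1, hx.2⟩, legendreP_eq]
  congr 2
  ring

lemma legWavelet_of_ne {l : ℝ} (hl : 0 < l) {k n n' m : ℕ} (hn : n' ≠ n) {x : ℝ}
    (hx : x ∈ Set.Ico (((n : ℝ) - 1) * l / 2 ^ (k - 1)) ((n : ℝ) * l / 2 ^ (k - 1))) :
    legWavelet l k n' m x = 0 := by
  rw [legWavelet, if_neg]
  rintro ⟨h1, h2⟩
  have h3 := h1.trans_lt hx.2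
  have h4 := hx.1.trans_lt h2
  rw [div_lt_div_iff_of_pos_right (by positivity)] at h3 h4
  have h5 := lt_of_mul_lt_mul_right h3 hl.le
  have h6 := lt_of_mul_lt_mul_right h4 hl.le
  apply hn
  have h7 : n' < n + 1 := by exact_mod_cast (by linarith : (n' : ℝ) < n + 1)
  have h8 : n < n' + 1 := by exact_mod_cast (by linarith : (n : ℝ) < n' + 1)
  omega

/-- The wavelet coefficients are rescaled Legendre coefficients of the pulled back function. -/
lemma waveletCoeff_eq {l : ℝ} (hl : 0 < l) {k n : ℕ} (hk : 1 ≤ k) (hn : 1 ≤ n)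
    (hnk : n ≤ 2 ^ (k - 1)) (f : ℝ → ℝ) (m : ℕ) :
    waveletCoeff l k f n m =
      (2 : ℝ) ^ ((k : ℝ) / 2) * Real.sqrt ((2 * (m : ℝ) + 1) / (2 * l)) *
        (l / 2 ^ k * cf m (pullback l k n f)) := by
  set c := (2 : ℝ) ^ ((k : ℝ) / 2) * Real.sqrt ((2 * (m : ℝ) + 1) / (2 * l))
  set a := ((n : ℝ) - 1) * l / 2 ^ (k - 1) with ha
  set b := (n : ℝ) * l / 2 ^ (k - 1) with hb
  have hab : a ≤ b := piece_le hl k n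
  have ha0 : 0 ≤ a := by
    have : (1 : ℝ) ≤ n := by exact_mod_cast hn
    have : 0 ≤ (n : ℝ) - 1 := by linarith
    positivity
  have hbl : b ≤ l := by
    rw [hb, div_le_iff₀ (by positivity), mul_comm]
    gcongr
    exact_mod_cast hnk
  have hind : (fun x => f x * legWavelet l k n m x) = (Set.Ico a b).indicator
      (fun x => (fun y => c * (pullback l k n f y * (legPoly m).eval y))
        ((2 : ℝ) ^ k / l * x + (1 - 2 * (n : ℝ)))) := by
    funext x
    by_cases hx : x ∈ Set.Ico a b
    · rw [Set.indicator_of_mem hx, legWavelet_of_mem hx]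
      simp only [pullback_apply hl]
      ring
    · rw [Set.indicator_of_notMem hx, legWavelet, if_neg (fun h => hx ⟨h.1, h.2⟩), mul_zero]
  rw [waveletCoeff, intervalIntegral.integral_of_le hl.le, hind,
    ← MeasureTheory.integral_Ico_eq_integral_Ioc, MeasureTheory.setIntegral_indicator
      measurableSet_Ico, Set.inter_eq_right.mpr (Set.Ico_subset_Ico ha0 hbl),
    MeasureTheory.integral_Ico_eq_integral_Ioc, ← intervalIntegral.integral_of_le hab]
  refine (integral_piece hl hk n
    (fun y => c * (pullback l k n f y * (legPoly m).eval y))).trans ?_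
  rw [intervalIntegral.integral_const_mul, cf]
  ring

/-- On each subinterval, the wavelet projection is the rescaled Legendre projection. -/
lemma waveletProj_eq {l : ℝ} (hl : 0 < l) {k n : ℕ} (hk : 1 ≤ k) (hn : 1 ≤ n)
    (hnk : n ≤ 2 ^ (k - 1)) (M : ℕ) (f : ℝ → ℝ) {x : ℝ}
    (hx : x ∈ Set.Ico (((n : ℝ) - 1) * l / 2 ^ (k - 1)) ((n : ℝ) * l / 2 ^ (k - 1))) :
    waveletProj l k M f x =
      (proj M (pullback l k n f)).eval ((2 : ℝ) ^ k / l * x + (1 - 2 * (n : ℝ))) := by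
  rw [waveletProj, Finset.sum_eq_single_of_mem n (Finset.mem_Icc.mpr ⟨hn, hnk⟩)]
  · rw [proj, eval_finsetSum]
    refine Finset.sum_congr rfl fun m _ => ?_
    rw [waveletCoeff_eq hl hk hn hnk, legWavelet_of_mem hx, eval_mul, eval_C]
    have h1 : ((2 : ℝ) ^ ((k : ℝ) / 2)) ^ 2 = 2 ^ k := by
      rw [← Real.rpow_mul_natCast (by norm_num), ← Real.rpow_natCast]
      congr 1
      push_cast
      ring
    have h2 : Real.sqrt ((2 * (m : ℝ) + 1) / (2 * l)) ^ 2 = (2 * (m : ℝ) + 1) / (2 * l) :=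
      Real.sq_sqrt (by positivity)
    set c1 := (2 : ℝ) ^ ((k : ℝ) / 2)
    set c2 := Real.sqrt ((2 * (m : ℝ) + 1) / (2 * l))
    have h3 : c1 ^ 2 * c2 ^ 2 * (l / 2 ^ k) = (2 * (m : ℝ) + 1) / 2 := by
      rw [h1, h2]
      field_simp
    rw [← h3]
    ring
  · intro n' _ hn'
    exact Finset.sum_eq_zero fun m _ => by rw [legWavelet_of_ne hl hn' hx, mul_zero]

lemma integral_sq_error_piece {l : ℝ} (hl : 0 < l) {k n : ℕ} (hk : 1 ≤ k) (hn : 1 ≤ n)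
    (hnk : n ≤ 2 ^ (k - 1)) (M : ℕ) {j : ℕ} {f : ℝ → ℝ} (hf : ContDiff ℝ j f) :
    ∫ x in (((n : ℝ) - 1) * l / 2 ^ (k - 1))..((n : ℝ) * l / 2 ^ (k - 1)),
        (iteratedDeriv j (fun t => f t - waveletProj l k M f t) x) ^ 2
      = ((2 : ℝ) ^ k / l) ^ (2 * j) * (l / 2 ^ k) * ∫ y in (-1 : ℝ)..1,
          iteratedDeriv j (fun y => pullback l k n f y
            - (proj M (pullback l k n f)).eval y) y ^ 2 := by
  set g : ℝ → ℝ := fun y => pullback l k n f y - (proj M (pullback l k n f)).eval y with hg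
  have hgC : ContDiff ℝ j g := (contDiff_pullback hf).sub (contDiff_eval _)
  rw [mul_assoc, ← integral_piece hl hk n (fun y => iteratedDeriv j g y ^ 2),
    ← intervalIntegral.integral_const_mul,
    intervalIntegral.integral_of_le (piece_le hl k n),
    intervalIntegral.integral_of_le (piece_le hl k n),
    MeasureTheory.integral_Ioc_eq_integral_Ioo, MeasureTheory.integral_Ioc_eq_integral_Ioo]
  refine MeasureTheory.setIntegral_congr_fun measurableSet_Ioo fun x hx => ?_
  -- The two functions agree on the open subinterval, hence so do their derivatives there.
  have h1 : (fun t => f t - waveletProj l k M f t) =ᶠ[nhds x]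
      fun t => g ((2 : ℝ) ^ k / l * t + (1 - 2 * (n : ℝ))) := by
    filter_upwards [isOpen_Ioo.mem_nhds hx] with t ht
    rw [waveletProj_eq hl hk hn hnk M f (Set.Ioo_subset_Ico_self ht)]
    simp only [hg, pullback_apply hl]
  rw [h1.iteratedDeriv_eq, iteratedDeriv_comp_affine hgC]
  ring

lemma integral_sq_piece {l : ℝ} (hl : 0 < l) {k : ℕ} (hk : 1 ≤ k) (n : ℕ)
    {j : ℕ} {f : ℝ → ℝ} (hf : ContDiff ℝ j f) :
    ∫ x in (((n : ℝ) - 1) * l / 2 ^ (k - 1))..((n : ℝ) * l / 2 ^ (k - 1)),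
        (iteratedDeriv j f x) ^ 2
      = ((2 : ℝ) ^ k / l) ^ (2 * j) * (l / 2 ^ k) * ∫ y in (-1 : ℝ)..1,
          iteratedDeriv j (pullback l k n f) y ^ 2 := by
  rw [mul_assoc, ← integral_piece hl hk n (fun y => iteratedDeriv j (pullback l k n f) y ^ 2),
    ← intervalIntegral.integral_const_mul]
  refine intervalIntegral.integral_congr fun x _ => ?_
  have h1 : f = fun t => pullback l k n f ((2 : ℝ) ^ k / l * t + (1 - 2 * (n : ℝ))) := by
    funext t
    rw [pullback_apply hl]
  have h2 : iteratedDeriv j f x = _ :=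
    (congrArg (fun F => iteratedDeriv j F x) h1).trans
      (iteratedDeriv_comp_affine (contDiff_pullback hf) _ _ _)
  rw [h2]
  ring

/-! ### The error bound on `(0,l)` -/

/-- Comparison of the scaling factors produced by the two sides of the estimate. -/
lemma scale_le {K l : ℝ} (hK : 1 ≤ K) (hl : 0 < l) {i j r m : ℕ} (hjr : j ≤ r) (hji : j ≤ i)
    (him : i ≤ m) :
    (K / l) ^ (2 * j) ≤ (1 + l) ^ (2 * m) * (K ^ (2 * (r : ℤ) - 2 * (i : ℤ)) * (K / l) ^ (2 * i)) := by
  have hK0 : 0 < K := by linarith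
  have h1 : K ^ (2 * (r : ℤ) - 2 * (i : ℤ)) = K ^ (2 * r) / K ^ (2 * i) := by
    rw [zpow_sub₀ hK0.ne']
    norm_cast
  have h2 : K ^ (2 * (r : ℤ) - 2 * (i : ℤ)) * (K / l) ^ (2 * i) = K ^ (2 * r) / l ^ (2 * i) := by
    rw [h1, div_pow]
    field_simp
  rw [h2, div_pow, ← mul_div_assoc, div_le_div_iff₀ (by positivity) (by positivity)]
  have h3 : l ^ (2 * i) = l ^ (2 * i - 2 * j) * l ^ (2 * j) := by
    rw [← pow_add]; congr 1; omega
  have h4 : l ^ (2 * i - 2 * j) ≤ (1 + l) ^ (2 * m) :=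
    (pow_le_pow_left₀ hl.le (by linarith) _).trans
      (pow_le_pow_right₀ (by linarith) (by omega))
  calc K ^ (2 * j) * l ^ (2 * i) = l ^ (2 * i - 2 * j) * K ^ (2 * j) * l ^ (2 * j) := by
        rw [h3]; ring
    _ ≤ _ := by gcongr

/-- The estimate on a single subinterval. -/
lemma piece_bound {A l : ℝ} (hA : 0 < A) (hl : 0 < l) {m r M : ℕ} (hrm : r ≤ m)
    (h : ∀ j ≤ r, ∀ u : ℝ → ℝ, ContDiff ℝ m u →
      (M : ℝ) ^ (2 * m + 1) * ∫ x in (-1 : ℝ)..1,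
          iteratedDeriv j (fun y => u y - (proj M u).eval y) x ^ 2
        ≤ A * (M : ℝ) ^ (4 * r) *
          ∫ x in (-1 : ℝ)..1, iteratedDeriv (max j (min m M)) u x ^ 2)
    {k n : ℕ} (hk : 1 ≤ k) (hn : 1 ≤ n) (hnk : n ≤ 2 ^ (k - 1)) {f : ℝ → ℝ} (hf : ContDiff ℝ m f)
    {j : ℕ} (hj : j ≤ r) :
    (M : ℝ) ^ (2 * m + 1) *
        ∫ x in (((n : ℝ) - 1) * l / 2 ^ (k - 1))..((n : ℝ) * l / 2 ^ (k - 1)),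
          (iteratedDeriv j (fun t => f t - waveletProj l k M f t) x) ^ 2
      ≤ A * (1 + l) ^ (2 * m) * (M : ℝ) ^ (4 * r) * ∑ i ∈ Finset.Icc (min m M) m,
          ((2 : ℝ) ^ k) ^ (2 * (r : ℤ) - 2 * (i : ℤ)) *
            ∫ x in (((n : ℝ) - 1) * l / 2 ^ (k - 1))..((n : ℝ) * l / 2 ^ (k - 1)),
              (iteratedDeriv i f x) ^ 2 := by
  set i := max j (min m M) with hi
  have him : i ≤ m := by omega
  set W : ℕ → ℝ := fun i => ((2 : ℝ) ^ k) ^ (2 * (r : ℤ) - 2 * (i : ℤ)) *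
    ∫ x in (((n : ℝ) - 1) * l / 2 ^ (k - 1))..((n : ℝ) * l / 2 ^ (k - 1)),
      (iteratedDeriv i f x) ^ 2 with hW
  have hW0 : ∀ i, 0 ≤ W i := fun i => mul_nonneg (by positivity)
    (intervalIntegral.integral_nonneg (piece_le hl k n) fun x _ => sq_nonneg _)
  have h1 : W i ≤ ∑ i ∈ Finset.Icc (min m M) m, W i :=
    Finset.single_le_sum (fun i _ => hW0 i) (Finset.mem_Icc.mpr ⟨le_max_right _ _, him⟩)
  have hfi : ContDiff ℝ i f := hf.of_le (by exact_mod_cast him)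
  have hfj : ContDiff ℝ j f := hf.of_le (by exact_mod_cast hj.trans hrm)
  have h2 := h j hj (pullback l k n f) (contDiff_pullback hf)
  have h3 := scale_le (one_le_pow₀ (by norm_num : (1 : ℝ) ≤ 2) : (1 : ℝ) ≤ 2 ^ k) hl hj
    (le_max_left j (min m M)) him
  have h4 := integral_sq_nonneg (iteratedDeriv i (pullback l k n f))
  rw [integral_sq_error_piece hl hk hn hnk M hfj]
  refine le_trans ?_ (mul_le_mul_of_nonneg_left h1 (by positivity))
  simp only [hW]
  rw [integral_sq_piece hl hk n hfi]
  set U := ∫ y in (-1 : ℝ)..1, iteratedDeriv i (pullback l k n f) y ^ 2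
  set V := ∫ y in (-1 : ℝ)..1, iteratedDeriv j (fun y => pullback l k n f y
    - (proj M (pullback l k n f)).eval y) y ^ 2
  calc (M : ℝ) ^ (2 * m + 1) * (((2 : ℝ) ^ k / l) ^ (2 * j) * (l / 2 ^ k) * V)
      = ((2 : ℝ) ^ k / l) ^ (2 * j) * (l / 2 ^ k) * ((M : ℝ) ^ (2 * m + 1) * V) := by ring
    _ ≤ ((2 : ℝ) ^ k / l) ^ (2 * j) * (l / 2 ^ k) * (A * (M : ℝ) ^ (4 * r) * U) := by gcongr
    _ ≤ ((1 + l) ^ (2 * m) * (((2 : ℝ) ^ k) ^ (2 * (r : ℤ) - 2 * (i : ℤ)) *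
          ((2 : ℝ) ^ k / l) ^ (2 * i))) * (l / 2 ^ k) * (A * (M : ℝ) ^ (4 * r) * U) := by gcongr
    _ = _ := by ring

/-- The subintervals of level `k` tile `(0,l)`. -/
lemma sum_integral_pieces {l : ℝ} (k : ℕ) {g : ℝ → ℝ} (hg : Continuous g) :
    ∑ n ∈ Finset.Icc (1 : ℕ) (2 ^ (k - 1)),
        ∫ x in (((n : ℝ) - 1) * l / 2 ^ (k - 1))..((n : ℝ) * l / 2 ^ (k - 1)), g x
      = ∫ x in (0 : ℝ)..l, g x := by
  have h := intervalIntegral.sum_integral_adjacent_intervals (μ := MeasureTheory.volume)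
    (f := g) (a := fun i : ℕ => (i : ℝ) * l / 2 ^ (k - 1)) (n := 2 ^ (k - 1))
    fun i _ => hg.intervalIntegrable _ _
  have h1 : ((2 ^ (k - 1) : ℕ) : ℝ) * l / 2 ^ (k - 1) = l := by
    push_cast
    field_simp
  simp only [h1] at h
  rw [Nat.cast_zero, zero_mul, zero_div] at h
  rw [← h, Finset.range_eq_Ico, ← Finset.Ico_add_one_right_eq_Icc,
    Finset.sum_Ico_eq_sum_range, Finset.sum_Ico_eq_sum_range]
  refine Finset.sum_congr (by simp) fun i _ => ?_
  simp only [zero_add]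
  push_cast
  congr 3 <;> ring

/-- Piecewise `H^r` error bound for the Legendre wavelet projection:
`‖f - Ψ_{k,M-1}(f)‖_{H^r(0,l)} ≤ C (M-1)^{2r - 1/2 - m} |f|_{H^{r,m,M-1,k}(0,l)}`,
where the `H^r` norm is computed piecewise on the intervals `J_{k,n}`. -/
theorem stmt_2 (m r : ℕ) (hm : 1 ≤ m) (hr1 : 1 ≤ r) (hrm : r ≤ m)
    (l : ℝ) (hl : 0 < l) :
    ∃ C : ℝ, 0 < C ∧ ∀ M : ℕ, 2 ≤ M → ∀ k : ℕ, 1 ≤ k →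
      ∀ f : ℝ → ℝ, ContDiff ℝ m f →
        Real.sqrt (∑ n ∈ Finset.Icc (1 : ℕ) (2 ^ (k - 1)), ∑ j ∈ Finset.range (r + 1),
            ∫ x in (((n : ℝ) - 1) * l / 2 ^ (k - 1))..((n : ℝ) * l / 2 ^ (k - 1)),
              (iteratedDeriv j (fun t => f t - waveletProj l k M f t) x) ^ 2)
          ≤ C * ((M : ℝ) - 1) ^ (2 * (r : ℝ) - 1 / 2 - (m : ℝ)) *
              semiNorm l r m M k f := by
  obtain ⟨A, hA, hbound⟩ := exists_reference_bound m r hm hr1 hrm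
  -- The factor `2 ^ (4 * r)` pays for replacing `M` by `M - 1`.
  set B := ((r : ℝ) + 1) * (A * (1 + l) ^ (2 * m)) * 2 ^ (4 * r) with hB
  have hB0 : 0 < B := by positivity
  refine ⟨Real.sqrt B, Real.sqrt_pos.mpr hB0, fun M hM k hk f hf => ?_⟩
  have hM2 : (2 : ℝ) ≤ M := by exact_mod_cast hM
  set L := (M : ℝ) - 1 with hL
  have hL1 : 1 ≤ L := by linarith
  have hL0 : 0 < L := by linarith
  set X := ∑ n ∈ Finset.Icc (1 : ℕ) (2 ^ (k - 1)), ∑ j ∈ Finset.range (r + 1),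
    ∫ x in (((n : ℝ) - 1) * l / 2 ^ (k - 1))..((n : ℝ) * l / 2 ^ (k - 1)),
      (iteratedDeriv j (fun t => f t - waveletProj l k M f t) x) ^ 2 with hX
  set Y := ∑ j ∈ Finset.Icc (min m M) m,
    ((2 : ℝ) ^ k) ^ (2 * (r : ℤ) - 2 * (j : ℤ)) *
      ∫ x in (0 : ℝ)..l, (iteratedDeriv j f x) ^ 2 with hY
  have hX0 : 0 ≤ X := Finset.sum_nonneg fun n _ => Finset.sum_nonneg fun j _ =>
    intervalIntegral.integral_nonneg (piece_le hl k n) fun x _ => sq_nonneg _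
  have hY0 : 0 ≤ Y := Finset.sum_nonneg fun j _ => mul_nonneg (by positivity)
    (intervalIntegral.integral_nonneg hl.le fun x _ => sq_nonneg _)
  have hYsum : ∑ n ∈ Finset.Icc (1 : ℕ) (2 ^ (k - 1)), ∑ i ∈ Finset.Icc (min m M) m,
      ((2 : ℝ) ^ k) ^ (2 * (r : ℤ) - 2 * (i : ℤ)) *
        ∫ x in (((n : ℝ) - 1) * l / 2 ^ (k - 1))..((n : ℝ) * l / 2 ^ (k - 1)),
          (iteratedDeriv i f x) ^ 2 = Y := by
    rw [Finset.sum_comm]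
    refine Finset.sum_congr rfl fun i hi => ?_
    rw [← Finset.mul_sum, sum_integral_pieces]
    exact (hf.continuous_iteratedDeriv i
      (by exact_mod_cast (Finset.mem_Icc.mp hi).2)).pow 2
  have h1 : (M : ℝ) ^ (2 * m + 1) * X
      ≤ ((r : ℝ) + 1) * (A * (1 + l) ^ (2 * m) * (M : ℝ) ^ (4 * r)) * Y := by
    rw [hX, ← hYsum, Finset.mul_sum, Finset.mul_sum]
    refine Finset.sum_le_sum fun n hn => ?_
    rw [Finset.mem_Icc] at hn
    rw [Finset.mul_sum]
    refine (Finset.sum_le_card_nsmul _ _ _ fun j hj =>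
      piece_bound hA hl hrm (hbound M (by omega)) hk hn.1 hn.2 hf
        (Nat.lt_succ_iff.mp (Finset.mem_range.mp hj))).trans_eq ?_
    rw [Finset.card_range, nsmul_eq_mul]
    push_cast
    ring
  have h2 : L ^ (2 * m + 1) * X ≤ B * L ^ (4 * r) * Y := by
    calc L ^ (2 * m + 1) * X ≤ (M : ℝ) ^ (2 * m + 1) * X := by
          gcongr
          linarith
      _ ≤ ((r : ℝ) + 1) * (A * (1 + l) ^ (2 * m) * (M : ℝ) ^ (4 * r)) * Y := h1
      _ ≤ ((r : ℝ) + 1) * (A * (1 + l) ^ (2 * m) * (2 * L) ^ (4 * r)) * Y := by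
          gcongr
          linarith
      _ = _ := by rw [hB, mul_pow]; ring
  set E := L ^ (2 * (r : ℝ) - 1 / 2 - (m : ℝ)) with hE
  have hE0 : 0 ≤ E := by positivity
  have hE2 : E ^ 2 * L ^ (2 * m + 1) = L ^ (4 * r) := by
    rw [hE, ← Real.rpow_mul_natCast hL0.le, ← Real.rpow_natCast, ← Real.rpow_natCast,
      ← Real.rpow_add hL0]
    congr 1
    push_cast
    ring
  have h3 : X ≤ B * E ^ 2 * Y := by
    have : L ^ (2 * m + 1) * X ≤ L ^ (2 * m + 1) * (B * E ^ 2 * Y) :=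
      h2.trans_eq (by rw [← hE2]; ring)
    exact le_of_mul_le_mul_left this (by positivity)
  calc Real.sqrt X ≤ Real.sqrt (B * E ^ 2 * Y) := Real.sqrt_le_sqrt h3
    _ = Real.sqrt B * E * Real.sqrt Y := by
        rw [Real.sqrt_mul (by positivity), Real.sqrt_mul hB0.le, Real.sqrt_sq hE0]
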